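/- Let X and Y be topological spaces, with X = |K| the polyhedron of a finite simplicial r-complex K such that H_r(X; ℤ/2) ≠ 0, and let φ : |K| → Y be a homeomorphism. Fix a nonzero r-cycle σ = Σᵢ σᵢ in C_r(K; ℤ/2). Then for every continuous f̄ : Y → Y homotopic to the identity of Y, one has ⋃ᵢ (φ ∘ σᵢ)(Δ_r) ⊆ f̄(Y). -/

import Mathlib

open Geometry

/-!
Conjugating by `φ` turns `fbar` into a self-map `f` of `|K|` homotopic to the identity. Suppose `f`
misses a point of a simplex `s` with `c s ≠ 0`; its range being closed, it misses an interior point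
`p` of `s`. Cut `s` into closed sets, one per vertex, on which the corresponding barycentric
coordinate is at least that of `p`: they meet only at `p`. Label the points of `s` accordingly and
the points outside `s` by an extra symbol.

For a cycle of small simplices, the number mod 2 of simplices carrying all vertex labels is
unchanged when the vertices move a little, hence also along a homotopy: by the prism identity the
change is a count on a boundary, that is, by Sperner's parity argument, a count of small simplices
carrying all labels including the extra one, and there are none. On an iterated barycentric
subdivision of `c` the count is `c s` by Sperner's lemma, whereas for the labels pulled back along
`f` it is zero, because `f` misses the only common point of the closed sets.
-/

section Supported

variable {R M α : Type*} [Semiring R] [AddCommMonoid M] [Module R M]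

theorem map_mem_of_mem_supported (f : (α →₀ R) →ₗ[R] M) {Q : Submodule R M} {S : Set α}
    (h : ∀ a ∈ S, f (Finsupp.single a 1) ∈ Q) {z : α →₀ R} (hz : z ∈ Finsupp.supported R R S) :
    f z ∈ Q := by
  suffices Finsupp.supported R R S ≤ Q.comap f from this hz
  rw [Finsupp.supported_eq_span_single, Submodule.span_le]
  rintro _ ⟨a, ha, rfl⟩
  exact h a ha

theorem map_eq_of_mem_supported {f g : (α →₀ R) →ₗ[R] M} {S : Set α}
    (h : ∀ a ∈ S, f (Finsupp.single a 1) = g (Finsupp.single a 1)) {z : α →₀ R}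
    (hz : z ∈ Finsupp.supported R R S) : f z = g z :=
  map_mem_of_mem_supported (Q := LinearMap.eqLocus f g) LinearMap.id h hz

end Supported

section BarycentricCoordinates

variable {ι E : Type*} [Fintype ι] [NormedAddCommGroup E] [NormedSpace ℝ E] {v : ι → E}
  {p : ι → ℝ}

theorem convexHull_range_eq_image_stdSimplex (v : ι → E) :
    convexHull ℝ (Set.range v) = Fintype.linearCombination ℝ v '' stdSimplex ℝ ι := by
  classical
  rw [← convexHull_rangle_single_eq_stdSimplex, LinearMap.image_convexHull, ← Set.range_comp]
  congr! 2
  ext i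
  simp

theorem exists_pos_linearCombination_notMem {q : E} (hq : q ∈ convexHull ℝ (Set.range v))
    {C : Set E} (hC : IsClosed C) (hqC : q ∉ C) :
    ∃ p : ι → ℝ, (∀ i, 0 < p i) ∧ ∑ i, p i = 1 ∧ Fintype.linearCombination ℝ v p ∉ C := by
  rw [convexHull_range_eq_image_stdSimplex] at hq
  obtain ⟨w, ⟨hw, hw1⟩, rfl⟩ := hq
  have hne : Nonempty ι := by
    by_contra h
    simp [not_nonempty_iff.1 h] at hw1
  let p : ℝ → ι → ℝ := fun ε i => (1 - ε) * w i + ε * (Fintype.card ι : ℝ)⁻¹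
  have hcont : Continuous fun ε => Fintype.linearCombination ℝ v (p ε) :=
    (LinearMap.continuous_of_finiteDimensional _).comp (by fun_prop)
  have hmiss : ∀ᶠ ε in nhds 0, Fintype.linearCombination ℝ v (p ε) ∉ C :=
    hcont.continuousAt.eventually_mem (hC.isOpen_compl.mem_nhds (by simpa [p] using hqC))
  obtain ⟨ε, hεC, hε0, hε1⟩ := ((hmiss.filter_mono nhdsWithin_le_nhds).and
    (Ioo_mem_nhdsGT (zero_lt_one (α := ℝ)))).exists
  refine ⟨p ε, fun i => ?_, ?_, hεC⟩
  · have := mul_nonneg (sub_nonneg.2 hε1.le) (hw i)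
    positivity
  · suffices 1 - ε + Fintype.card ι * (ε * (Fintype.card ι : ℝ)⁻¹) = 1 by
      simpa [p, Finset.sum_add_distrib, ← Finset.mul_sum, hw1]
    field_simp
    ring

/-- The points of the simplex spanned by `v` whose `i`-th barycentric coordinate is at least `p i`.
As `i` varies these sets cover the simplex, and they meet only at the point with barycentric
coordinates `p`. -/
def coordGe (v : ι → E) (p : ι → ℝ) (i : ι) : Set E :=
  Fintype.linearCombination ℝ v '' {w ∈ stdSimplex ℝ ι | p i ≤ w i}

theorem coordGe_subset_convexHull (v : ι → E) (p : ι → ℝ) (i : ι) :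
    coordGe v p i ⊆ convexHull ℝ (Set.range v) := by
  rw [convexHull_range_eq_image_stdSimplex]
  exact Set.image_mono fun _ hw => hw.1

theorem isClosed_coordGe (v : ι → E) (p : ι → ℝ) (i : ι) : IsClosed (coordGe v p i) := by
  have hcompact : IsCompact {w ∈ stdSimplex ℝ ι | p i ≤ w i} :=
    (isCompact_stdSimplex ℝ ι).inter_right (isClosed_le continuous_const (continuous_apply i))
  exact (hcompact.image (LinearMap.continuous_of_finiteDimensional _)).isClosed

theorem exists_mem_coordGe (hp : ∑ i, p i = 1) {x : E} (hx : x ∈ convexHull ℝ (Set.range v)) :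
    ∃ i, x ∈ coordGe v p i := by
  rw [convexHull_range_eq_image_stdSimplex] at hx
  obtain ⟨w, hw, rfl⟩ := hx
  obtain ⟨i, -, hi⟩ := Finset.exists_le_of_sum_le
    (Finset.nonempty_of_sum_ne_zero (hp.trans_ne one_ne_zero)) (hp.trans hw.2.symm).le
  exact ⟨i, w, ⟨hw, hi⟩, rfl⟩

theorem mem_of_mem_coordGe_of_mem_convexHull (hv : AffineIndependent ℝ v) {i : ι} (hp : 0 < p i)
    {T : Set ι} {x : E} (hxi : x ∈ coordGe v p i) (hxT : x ∈ convexHull ℝ (v '' T)) : i ∈ T := by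
  obtain ⟨w, ⟨hw, hpw⟩, rfl⟩ := hxi
  by_contra hi
  refine (hp.trans_le hpw).ne' (hv.eq_zero_of_affineCombination_mem_affineSpan hw.2 ?_
    (Finset.mem_univ i) hi)
  rw [Finset.affineCombination_eq_linear_combination _ _ _ hw.2]
  exact convexHull_subset_affineSpan _ hxT

theorem eq_linearCombination_of_forall_mem_coordGe (hv : AffineIndependent ℝ v)
    (hp : ∑ i, p i = 1) {x : E} (hx : ∀ i, x ∈ coordGe v p i) :
    x = Fintype.linearCombination ℝ v p := by
  choose w hw hwx using hx
  obtain ⟨i₀, -⟩ := Finset.nonempty_of_sum_ne_zero (hp.trans_ne one_ne_zero)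
  have hunique : ∀ i, w i = w i₀ := fun i =>
    (affineIndependent_iff_eq_of_fintype_affineCombination_eq ℝ v).1 hv _ _ (hw i).1.2
      (hw i₀).1.2 (by
        rw [Finset.affineCombination_eq_linear_combination _ _ _ (hw i).1.2,
          Finset.affineCombination_eq_linear_combination _ _ _ (hw i₀).1.2]
        exact (hwx i).trans (hwx i₀).symm)
  have hle : ∀ i ∈ Finset.univ, p i ≤ w i₀ i := fun i _ => hunique i ▸ (hw i).2
  have hp_eq : p = w i₀ := funext fun i =>
    (Finset.sum_eq_sum_iff_of_le hle).1 (hp.trans (hw i₀).1.2.symm) i (Finset.mem_univ i)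
  rw [hp_eq, hwx]

end BarycentricCoordinates

section VertexLabels

variable {ι : Type*} [Fintype ι]

variable (ι) in
/-- The labels of the vertices of a simplex, each counted once; `none` is left to label the points
outside the simplex. -/
def vertexLabels : Multiset (Option ι) :=
  Finset.univ.val.map some

@[simp]
theorem some_mem_vertexLabels (i : ι) : some i ∈ vertexLabels ι :=
  Multiset.mem_map_of_mem _ (Finset.mem_univ i)

theorem none_notMem_vertexLabels : none ∉ vertexLabels ι := by
  simp [vertexLabels]

theorem nodup_vertexLabels : (vertexLabels ι).Nodup :=
  Finset.univ.nodup.map (Option.some_injective _)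

theorem mem_none_cons_vertexLabels (a : Option ι) : a ∈ none ::ₘ vertexLabels ι := by
  cases a <;> simp

end VertexLabels

section FacetCover

variable {E : Type*} [NormedAddCommGroup E] [NormedSpace ℝ E] {K : SimplicialComplex ℝ E}
  {s : Finset E} {p : s → ℝ}

theorem isCompact_space_of_finite_faces (hK : K.faces.Finite) : IsCompact K.space :=
  hK.isCompact_biUnion fun s _ => s.finite_toSet.isCompact_convexHull ℝ

/-- A closed cover of `|K|`: the simplex `s` is cut up by its barycentric coordinates, and all other
simplices together form the set labelled `none`. -/
def facetCover (K : SimplicialComplex ℝ E) (s : Finset E) (p : s → ℝ) : Option s → Set E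
  | none => ⋃ t ∈ K.faces \ {s}, convexHull ℝ (t : Set E)
  | some i => coordGe (↑) p i

open Classical in
/-- A labelling of the points of `|K|` subordinate to `facetCover K s p`. -/
noncomputable def facetLabel (p : s → ℝ) (x : E) : Option s :=
  if h : ∃ i, x ∈ coordGe (↑) p i then some h.choose else none

theorem mem_coordGe_of_facetLabel_eq_some {x : E} {i : s} (h : facetLabel p x = some i) :
    x ∈ coordGe (↑) p i := by
  rw [facetLabel, Option.dite_none_right_eq_some] at h
  obtain ⟨hex, hi⟩ := h
  exact Option.some_injective _ hi ▸ hex.choose_spec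

theorem exists_facetLabel_eq_some (hp : ∑ i, p i = 1) {x : E}
    (hx : x ∈ convexHull ℝ (s : Set E)) : ∃ i, facetLabel p x = some i := by
  rw [← Subtype.range_coe (s := (s : Set E))] at hx
  have hex : ∃ i : s, x ∈ coordGe (↑) p i := exists_mem_coordGe hp hx
  exact ⟨_, dif_pos hex⟩

theorem mem_facetCover_facetLabel (hp : ∑ i, p i = 1) {x : E} (hx : x ∈ K.space) :
    x ∈ facetCover K s p (facetLabel p x) := by
  rcases h : facetLabel p x with _ | i
  · obtain ⟨t, ht, hxt⟩ := K.mem_space_iff.1 hx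
    refine Set.mem_biUnion ⟨ht, ?_⟩ hxt
    rintro rfl
    obtain ⟨i, hi⟩ := exists_facetLabel_eq_some hp hxt
    exact Option.some_ne_none i (hi.symm.trans h)
  · exact mem_coordGe_of_facetLabel_eq_some h

theorem isClosed_facetCover (hK : K.faces.Finite) (a : Option s) :
    IsClosed (facetCover K s p a) := by
  cases a with
  | none =>
    exact (hK.subset Set.sdiff_subset).isClosed_biUnion fun t _ =>
      t.finite_toSet.isClosed_convexHull ℝ
  | some i => exact isClosed_coordGe _ p i

theorem coe_mem_of_mem_coordGe (hs : s ∈ K.faces) {t : Finset E} (ht : t ∈ K.faces) {i : s}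
    (hp : 0 < p i) {x : E} (hxi : x ∈ coordGe ((↑) : s → E) p i)
    (hxt : x ∈ convexHull ℝ (t : Set E)) : (i : E) ∈ t := by
  have hxs : x ∈ convexHull ℝ (s : Set E) := by
    simpa using coordGe_subset_convexHull _ p i hxi
  refine mem_of_mem_coordGe_of_mem_convexHull (T := {j : s | (j : E) ∈ t}) (K.indep hs) hp hxi ?_
  convert! K.inter_subset_convexHull hs ht ⟨hxs, hxt⟩
  ext y
  simp [and_comm]

theorem exists_notMem_facetCover (hs : s ∈ K.facets) (hp : ∀ i, 0 < p i) (x : E) :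
    ∃ a, x ∉ facetCover K s p a := by
  by_contra! h
  obtain ⟨t, ⟨ht, hts⟩, hxt⟩ := Set.mem_iUnion₂.1 (h none)
  have hst : s ⊆ t := fun v hv => coe_mem_of_mem_coordGe hs.1 ht (hp ⟨v, hv⟩) (h (some _)) hxt
  exact hts (hs.2 ht hst).symm

end FacetCover

/-- Ordered simplicial chains mod 2: formal sums of lists of vertices, repetitions allowed. A list
of length `n + 1` is an `n`-simplex, and the empty list augments the complex in degree `-1`. -/
abbrev OrderedChain (V : Type*) := List V →₀ ZMod 2

namespace OrderedChain

open Finsupp (single supported linearCombination)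

variable {V W L : Type*}

section Boundary

/-- The cone with apex `x`, placing `x` in front of every simplex. -/
noncomputable def cone (x : V) : OrderedChain V →ₗ[ZMod 2] OrderedChain V :=
  Finsupp.lmapDomain _ _ (List.cons x)

@[simp]
theorem cone_single (x : V) (l : List V) : cone x (single l 1) = single (x :: l) 1 := by
  simp [cone]

/-- The boundary of an ordered simplex, computed by expanding along its first vertex. -/
noncomputable def boundaryList : List V → OrderedChain V
  | [] => 0
  | x :: l => single l 1 + cone x (boundaryList l)

/-- The boundary operator of the augmented complex of ordered chains. -/
noncomputable def boundary : OrderedChain V →ₗ[ZMod 2] OrderedChain V :=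
  linearCombination (ZMod 2) boundaryList

@[simp]
theorem boundary_single_nil : boundary (single ([] : List V) 1) = 0 := by
  simp [boundary, boundaryList]

@[simp]
theorem boundary_single_cons (x : V) (l : List V) :
    boundary (single (x :: l) 1) = single l 1 + cone x (boundary (single l 1)) := by
  simp [boundary, boundaryList]

theorem boundary_cone (x : V) (z : OrderedChain V) :
    boundary (cone x z) = z + cone x (boundary z) := by
  suffices h : boundary ∘ₗ cone x = LinearMap.id + cone x ∘ₗ boundary from LinearMap.congr_fun h z
  ext l : 2
  simp

theorem boundary_boundary_single (l : List V) : boundary (boundary (single l 1)) = 0 := by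
  induction l with
  | nil => simp
  | cons x l ih => simp [boundary_cone, ih, ZModModule.add_self]

theorem boundary_single_mem_supported (l : List V) :
    boundary (single l 1) ∈ supported (ZMod 2) (ZMod 2) {k | ∃ x, l.Perm (x :: k)} := by
  induction l with
  | nil => simp
  | cons x l ih =>
    rw [boundary_single_cons]
    refine add_mem (Finsupp.single_mem_supported _ _ ⟨x, .refl _⟩) ?_
    refine map_mem_of_mem_supported (cone x) ?_ ih
    rintro k ⟨y, hk⟩
    rw [cone_single]
    exact Finsupp.single_mem_supported _ _ ⟨y, (hk.cons x).trans (.swap y x k)⟩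

end Boundary

section Push

/-- The chain map induced by a map of vertices. -/
noncomputable def push (f : V → W) : OrderedChain V →ₗ[ZMod 2] OrderedChain W :=
  Finsupp.lmapDomain _ _ (List.map f)

@[simp]
theorem push_single (f : V → W) (l : List V) : push f (single l 1) = single (l.map f) 1 := by
  simp [push]

theorem push_push (g : W → L) (f : V → W) (z : OrderedChain V) :
    push g (push f z) = push (g ∘ f) z := by
  suffices h : push g ∘ₗ push f = push (g ∘ f) from LinearMap.congr_fun h z
  ext l : 2
  simp

theorem push_injective {e : V → W} (he : e.Injective) : Function.Injective (push e) :=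
  Finsupp.mapDomain_injective (List.map_injective_iff.2 he)

theorem exists_push_coe_eq {T : Set V} {S : Set (List V)}
    (hS : ∀ k ∈ S, ∀ x ∈ k, x ∈ T) {z : OrderedChain V} (hz : z ∈ supported (ZMod 2) (ZMod 2) S) :
    ∃ z' ∈ supported (ZMod 2) (ZMod 2) (List.map ((↑) : T → V) ⁻¹' S), push (↑) z' = z := by
  refine map_mem_of_mem_supported (Q := (supported (ZMod 2) (ZMod 2) _).map (push Subtype.val))
    LinearMap.id (fun k hk => ?_) hz
  lift k to List T using hS k hk
  exact ⟨single k 1, Finsupp.single_mem_supported _ _ hk, push_single _ k⟩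

theorem push_cone (f : V → W) (x : V) (z : OrderedChain V) :
    push f (cone x z) = cone (f x) (push f z) := by
  suffices h : push f ∘ₗ cone x = cone (f x) ∘ₗ push f from LinearMap.congr_fun h z
  ext l : 2
  simp

theorem boundary_push (f : V → W) (z : OrderedChain V) :
    boundary (push f z) = push f (boundary z) := by
  suffices h : boundary ∘ₗ push f = push f ∘ₗ boundary from LinearMap.congr_fun h z
  ext l : 2
  suffices boundary (single (l.map f) 1) = push f (boundary (single l 1)) by simpa
  induction l with
  | nil => simp
  | cons x l ih => simp [push_cone, ih]

/-- The prism over an ordered simplex, triangulated with bottom `f` and top `g`. -/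
noncomputable def prismList (f g : V → W) : List V → OrderedChain W
  | [] => 0
  | x :: l => cone (f x) (single (g x :: l.map g) 1 + prismList f g l)

/-- The prism operator, a chain homotopy from `push f` to `push g`. -/
noncomputable def prism (f g : V → W) : OrderedChain V →ₗ[ZMod 2] OrderedChain W :=
  linearCombination (ZMod 2) (prismList f g)

@[simp]
theorem prism_single_nil (f g : V → W) : prism f g (single [] 1) = 0 := by
  simp [prism, prismList]

@[simp]
theorem prism_single_cons (f g : V → W) (x : V) (l : List V) :
    prism f g (single (x :: l) 1) =
      cone (f x) (single (g x :: l.map g) 1 + prism f g (single l 1)) := by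
  simp [prism, prismList]

theorem prism_cone (f g : V → W) (x : V) (z : OrderedChain V) :
    prism f g (cone x z) = cone (f x) (cone (g x) (push g z) + prism f g z) := by
  suffices h : prism f g ∘ₗ cone x = cone (f x) ∘ₗ (cone (g x) ∘ₗ push g + prism f g) from
    LinearMap.congr_fun h z
  ext l : 2
  simp

theorem boundary_prism (f g : V → W) (z : OrderedChain V) :
    boundary (prism f g z) = push f z + push g z + prism f g (boundary z) := by
  suffices h : boundary ∘ₗ prism f g = push f + push g + prism f g ∘ₗ boundary from
    LinearMap.congr_fun h z
  ext l : 2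
  suffices boundary (prism f g (single l 1)) =
      single (l.map f) 1 + single (l.map g) 1 + prism f g (boundary (single l 1)) by simpa
  induction l with
  | nil => simp [ZModModule.add_self]
  | cons x l ih =>
    have hpush : boundary (single (l.map g) 1) = push g (boundary (single l 1)) := by
      rw [← boundary_push, push_single]
    have hcancel := ZModModule.add_self (single (f x :: l.map g) (1 : ZMod 2))
    simp only [prism_single_cons, boundary_single_cons, boundary_cone, prism_cone, map_add, ih,
      hpush, cone_single, List.map_cons]
    rw [← sub_eq_zero]
    refine Eq.trans ?_ hcancel
    abel

theorem prism_single_mem_supported (f g : V → W) (l : List V) :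
    prism f g (single l 1) ∈
      supported (ZMod 2) (ZMod 2) {k | k ⊆ l.map f ++ l.map g} := by
  induction l with
  | nil => simp
  | cons x l ih =>
    rw [prism_single_cons]
    refine map_mem_of_mem_supported (S := {k | k ⊆ (x :: l).map f ++ (x :: l).map g})
      (cone (f x)) ?_ (add_mem (Finsupp.single_mem_supported _ _ ?_) ?_)
    · intro k hk
      rw [cone_single]
      exact Finsupp.single_mem_supported _ _ (List.cons_subset.2 ⟨by simp, hk⟩)
    · exact List.subset_append_right _ _
    · refine Finsupp.supported_mono (fun k hk => List.Subset.trans hk ?_) ih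
      simp only [List.map_cons]
      grind

end Push

section Count

open Classical in
/-- The number mod 2 of simplices in a chain whose list of vertices is an ordering of `τ`. -/
noncomputable def count (τ : Multiset V) : OrderedChain V →ₗ[ZMod 2] ZMod 2 :=
  linearCombination (ZMod 2) (fun l => if (l : Multiset V) = τ then 1 else 0)

open Classical in
theorem count_single (τ : Multiset V) (l : List V) :
    count τ (single l 1) = if (l : Multiset V) = τ then 1 else 0 := by
  simp [count]

theorem count_single_of_ne {τ : Multiset V} {l : List V} (h : (l : Multiset V) ≠ τ) :
    count τ (single l 1) = 0 := by
  rw [count_single, if_neg h]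

open Classical in
theorem count_cone (τ : Multiset V) (x : V) (z : OrderedChain V) :
    count τ (cone x z) = if x ∈ τ then count (τ.erase x) z else 0 := by
  split_ifs with h
  · obtain ⟨σ, rfl⟩ := Multiset.exists_cons_of_mem h
    suffices h : count (x ::ₘ σ) ∘ₗ cone x = count ((x ::ₘ σ).erase x) from LinearMap.congr_fun h z
    ext l
    simp [count_single, ← Multiset.cons_coe]
  · suffices h : count τ ∘ₗ cone x = 0 from LinearMap.congr_fun h z
    ext l
    have : ((x :: l : List V) : Multiset V) ≠ τ := by
      rintro rfl
      simp at h
    simp [count_single_of_ne this]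

theorem count_boundary_single_eq_zero {τ : Multiset V} {l : List V}
    (h : ∀ y, (l : Multiset V) ≠ y ::ₘ τ) : count τ (boundary (single l 1)) = 0 := by
  refine map_eq_of_mem_supported (g := 0) ?_ (boundary_single_mem_supported l)
  rintro k ⟨y, hk⟩
  refine count_single_of_ne ?_
  rintro rfl
  exact h y (Multiset.coe_eq_coe.2 hk)

open Classical in
theorem count_boundary_single_of_eq_cons {τ : Multiset V} {y : V} {l : List V}
    (h : (l : Multiset V) = y ::ₘ τ) :
    count τ (boundary (single l 1)) = (τ.count y + 1 : ℕ) := by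
  induction l generalizing τ with
  | nil => simp at h
  | cons x l ih =>
    rw [← Multiset.cons_coe] at h
    rw [boundary_single_cons, map_add, count_cone, count_single, Nat.cast_add, Nat.cast_one,
      add_comm]
    by_cases hxy : x = y
    · subst hxy
      obtain rfl : (l : Multiset V) = τ := (Multiset.cons_inj_right x).1 h
      rw [if_pos rfl]
      split_ifs with hx
      · obtain ⟨σ, hσ⟩ := Multiset.exists_cons_of_mem hx
        simp [hσ, ih hσ]
      · simp [Multiset.count_eq_zero_of_notMem hx]
    · obtain ⟨-, σ, hl, rfl⟩ := (Multiset.cons_eq_cons.1 h).resolve_left fun h => hxy h.1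
      have hne : (l : Multiset V) ≠ x ::ₘ σ := by
        rw [hl, Ne, Multiset.cons_inj_left]
        exact Ne.symm hxy
      rw [if_neg hne, if_pos (Multiset.mem_cons_self x σ), Multiset.erase_cons_head, ih hl,
        Multiset.count_cons_of_ne (Ne.symm hxy)]
      simp

/-- When `w` is missing and a label of `τ` is repeated, there are two facets labelled by `τ`, which
cancel. -/
theorem count_boundary_single {τ : Multiset V} {w : V} (hw : w ∉ τ) (hτ : τ.Nodup) {l : List V}
    (hl : ∀ x ∈ l, x ∈ w ::ₘ τ) :
    count τ (boundary (single l 1)) = count (w ::ₘ τ) (single l 1) := by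
  classical
  by_cases h : ∃ y, (l : Multiset V) = y ::ₘ τ
  · obtain ⟨y, hy⟩ := h
    rw [count_boundary_single_of_eq_cons hy, count_single, hy]
    have hymem : y ∈ l := by simp [← Multiset.mem_coe, hy]
    obtain rfl | hyτ := Multiset.mem_cons.1 (hl y hymem)
    · simp [Multiset.count_eq_zero_of_notMem hw]
    · have hyw : y ≠ w := ne_of_mem_of_not_mem hyτ hw
      rw [Multiset.count_eq_one_of_mem hτ hyτ, if_neg (by rwa [Multiset.cons_inj_left])]
      exact CharTwo.add_self_eq_zero 1
  · push Not at h
    rw [count_boundary_single_eq_zero h, count_single_of_ne (h w)]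

theorem count_push_boundary {τ : Multiset W} {w : W} (hw : w ∉ τ) (hτ : τ.Nodup) {f : V → W}
    {z : OrderedChain V}
    (hz : z ∈ supported (ZMod 2) (ZMod 2) {k | ∀ x ∈ k, f x ∈ w ::ₘ τ}) :
    count τ (push f (boundary z)) = count (w ::ₘ τ) (push f z) := by
  rw [← boundary_push]
  refine map_eq_of_mem_supported (f := count τ ∘ₗ boundary ∘ₗ push f)
    (g := count (w ::ₘ τ) ∘ₗ push f) ?_ hz
  intro k hk
  simp only [LinearMap.comp_apply, push_single]
  exact count_boundary_single hw hτ (List.forall_mem_map.2 hk)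

theorem count_push_eq_of_boundary_eq_zero {τ : Multiset W} {w : W} (hw : w ∉ τ) (hτ : τ.Nodup)
    {f g : V → W} (hf : ∀ x, f x ∈ w ::ₘ τ) (hg : ∀ x, g x ∈ w ::ₘ τ) {S : Set (List V)}
    (hS : ∀ k ∈ S, ∃ a ∈ w ::ₘ τ, ∀ x ∈ k, f x ≠ a ∧ g x ≠ a) {z : OrderedChain V}
    (hz : boundary z = 0) (hzS : z ∈ supported (ZMod 2) (ZMod 2) S) :
    count τ (push f z) = count τ (push g z) := by
  have hprism : count τ (boundary (prism f g z)) = 0 := by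
    refine map_eq_of_mem_supported (f := count τ ∘ₗ boundary ∘ₗ prism f g) (g := 0) ?_ hzS
    intro k hk
    obtain ⟨a, ha, hka⟩ := hS k hk
    refine map_eq_of_mem_supported (f := count τ ∘ₗ boundary) (g := 0) ?_
      (prism_single_mem_supported f g k)
    intro m hm
    have hmem : ∀ y ∈ m, ∃ x ∈ k, f x = y ∨ g x = y := fun y hy => by
      simpa [← exists_or, ← and_or_left] using hm hy
    have hlabels : ∀ y ∈ m, y ∈ w ::ₘ τ := fun y hy => by
      obtain ⟨x, -, rfl | rfl⟩ := hmem y hy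
      exacts [hf x, hg x]
    refine (count_boundary_single hw hτ hlabels).trans (count_single_of_ne ?_)
    intro hm_eq
    obtain ⟨x, hx, hxa⟩ := hmem a (by rwa [← Multiset.mem_coe, hm_eq])
    exact hxa.elim (hka x hx).1 (hka x hx).2
  rw [boundary_prism, hz, map_zero, add_zero, map_add] at hprism
  exact CharTwo.add_eq_zero.1 hprism

end Count

section Cycle

theorem exists_boundary_single_eq_sum_erase [DecidableEq V] :
    ∃ o : Finset V → List V, (∀ s, (o s : Multiset V) = s.val) ∧
      ∀ s, boundary (single (o s) 1) = ∑ x ∈ s, single (o (s.erase x)) 1 := by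
  classical
  let _ : LinearOrder V := linearOrderOfSTO WellOrderingRel
  suffices h : ∀ s : Finset V, boundary (single (s.sort (· ≤ ·)) 1) =
      ∑ x ∈ s, single ((s.erase x).sort (· ≤ ·)) 1 from
    ⟨fun s => s.sort (· ≤ ·), fun s => Finset.sort_eq s _, h⟩
  intro s
  induction s using Finset.induction_on_min with
  | empty => simp
  | insert a s ha ih =>
    have has : a ∉ s := fun h => lt_irrefl _ (ha a h)
    have hsort : ∀ t ⊆ s, (insert a t).sort (· ≤ ·) = a :: t.sort (· ≤ ·) := fun t ht => by
      convert Finset.sort_insert (· ≤ ·) (a := a) (s := t) (fun b hb => (ha b (ht hb)).le)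
        fun h => has (ht h)
    rw [hsort s subset_rfl, boundary_single_cons, ih, Finset.sum_insert has,
      Finset.erase_insert has, map_sum]
    congr 1
    refine Finset.sum_congr rfl fun x hx => ?_
    rw [cone_single, Finset.erase_insert_of_ne (ne_of_mem_of_not_mem hx has).symm,
      hsort _ (Finset.erase_subset _ _)]

theorem boundary_sum_eq_zero [DecidableEq V] {o : Finset V → List V}
    (ho : ∀ s, boundary (single (o s) 1) = ∑ x ∈ s, single (o (s.erase x)) 1)
    {S : Finset (Finset V)} {r : ℕ} (hS : ∀ s ∈ S, s.card = r + 1) {c : Finset V → ZMod 2}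
    (hc : ∀ s ∈ S, ∀ t ⊆ s, t.card = r → ∑ s ∈ S with t ⊆ s, c s = 0) :
    boundary (∑ s ∈ S, c s • single (o s) 1) = 0 := by
  have hfacets : ∀ s ∈ S, boundary (single (o s) 1) = ∑ t ∈ s.powersetCard r, single (o t) 1 := by
    intro s hs
    rw [ho, ← Finset.sum_image (f := fun t => single (o t) 1) (Finset.erase_injOn s)]
    refine Finset.sum_congr (Finset.ext fun t => ?_) fun _ _ => rfl
    rw [Finset.mem_powersetCard, Finset.mem_image, ← Finset.covBy_iff_exists_erase,
      Finset.covBy_iff_card_sdiff_eq_one]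
    refine and_congr_right fun hts => ?_
    have hcard := Finset.card_sdiff_add_card_eq_card hts
    rw [hS s hs] at hcard
    omega
  simp only [map_sum, map_smul]
  calc ∑ s ∈ S, c s • boundary (single (o s) 1)
      = ∑ s ∈ S, ∑ t ∈ s.powersetCard r, c s • single (o t) 1 :=
        Finset.sum_congr rfl fun s hs => by rw [hfacets s hs, Finset.smul_sum]
    _ = ∑ t ∈ S.biUnion (Finset.powersetCard r), ∑ s ∈ S with t ⊆ s, c s • single (o t) 1 := by
        refine Finset.sum_comm' fun s t => ?_
        simp only [Finset.mem_biUnion, Finset.mem_filter, Finset.mem_powersetCard]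
        grind
    _ = 0 := by
        refine Finset.sum_eq_zero fun t ht => ?_
        obtain ⟨s, hs, ht⟩ := Finset.mem_biUnion.1 ht
        obtain ⟨hts, htr⟩ := Finset.mem_powersetCard.1 ht
        rw [← Finset.sum_smul, hc s hs t hts htr, zero_smul]

end Cycle

section Subdivision

variable {E : Type*} [NormedAddCommGroup E] [NormedSpace ℝ E]

/-- The barycenter of the vertices of an ordered simplex; it is `0` for the empty simplex. -/
noncomputable def barycenter (l : List E) : E :=
  Finset.univ.centerMass (fun _ : Fin l.length => (1 : ℝ)) l.get

theorem barycenter_mem_convexHull {l : List E} (hl : l ≠ []) :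
    barycenter l ∈ convexHull ℝ {x | x ∈ l} := by
  have hlen : (0 : ℝ) < l.length := Nat.cast_pos.2 (List.length_pos_of_ne_nil hl)
  refine Finset.centerMass_mem_convexHull _ (fun _ _ => zero_le_one) (by simpa using hlen) ?_
  exact fun i _ => List.get_mem l i

theorem dist_barycenter_le_of_mem {l : List E} {r : ℕ} (hl : l.length ≤ r + 1) {x : E}
    (hx : x ∈ l) : dist x (barycenter l) ≤ (r / (r + 1) : ℝ) * Metric.diam {x | x ∈ l} := by
  obtain ⟨i, rfl⟩ := List.get_of_mem hx
  have hlen : 0 < l.length := List.length_pos_of_mem hx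
  have hpos : (0 : ℝ) < l.length := Nat.cast_pos.2 hlen
  have hsum : barycenter l - l.get i =
      (l.length : ℝ)⁻¹ • ∑ j ∈ Finset.univ.erase i, (l.get j - l.get i) := by
    rw [Finset.sum_erase _ (sub_self _)]
    simp [barycenter, Finset.centerMass, smul_sub, Finset.sum_sub_distrib,
      ← Nat.cast_smul_eq_nsmul ℝ, smul_smul, hpos.ne']
  have hdist : ∀ j, ‖l.get j - l.get i‖ ≤ Metric.diam {x | x ∈ l} := fun j => by
    rw [← dist_eq_norm]
    exact Metric.dist_le_diam_of_mem l.finite_toSet.isBounded (l.get_mem j) hx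
  calc dist (l.get i) (barycenter l)
      = (l.length : ℝ)⁻¹ * ‖∑ j ∈ Finset.univ.erase i, (l.get j - l.get i)‖ := by
        rw [dist_comm, dist_eq_norm, hsum, norm_smul, Real.norm_of_nonneg (by positivity)]
    _ ≤ (l.length : ℝ)⁻¹ * ((l.length - 1 : ℕ) * Metric.diam {x | x ∈ l}) := by
        gcongr
        refine (norm_sum_le_of_le _ fun j _ => hdist j).trans_eq ?_
        simp [Finset.card_erase_of_mem]
    _ = (1 - (l.length : ℝ)⁻¹) * Metric.diam {x | x ∈ l} := by
        rw [Nat.cast_pred hlen]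
        field_simp
    _ ≤ (1 - ((r + 1 : ℕ) : ℝ)⁻¹) * Metric.diam {x | x ∈ l} := by gcongr
    _ = (r / (r + 1) : ℝ) * Metric.diam {x | x ∈ l} := by
        push_cast
        field_simp
        ring

theorem dist_barycenter_le {l : List E} {r : ℕ} (hl : l.length ≤ r + 1) {x : E}
    (hx : x ∈ convexHull ℝ {x | x ∈ l}) :
    dist x (barycenter l) ≤ (r / (r + 1) : ℝ) * Metric.diam {x | x ∈ l} :=
  convexHull_min (fun _ hy => dist_barycenter_le_of_mem hl hy) (convex_closedBall _ _) hx

/-- Barycentric subdivision of the simplices with at most `n` vertices, where `n` bounds the depth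
of the recursion: subdivide the boundary, then cone from the barycenter. -/
noncomputable def subdivideAux : ℕ → OrderedChain E →ₗ[ZMod 2] OrderedChain E
  | 0 => LinearMap.id
  | n + 1 => linearCombination (ZMod 2)
      fun l => cone (barycenter l) (subdivideAux n (boundary (single l 1)))

/-- Barycentric subdivision of ordered chains. -/
noncomputable def subdivide : OrderedChain E →ₗ[ZMod 2] OrderedChain E :=
  linearCombination (ZMod 2) fun l => subdivideAux l.length (single l 1)

@[simp]
theorem subdivide_single_nil : subdivide (single ([] : List E) 1) = single [] 1 := by
  simp [subdivide, subdivideAux]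

theorem subdivide_single {l : List E} (hl : l ≠ []) :
    subdivide (single l 1) = cone (barycenter l) (subdivide (boundary (single l 1))) := by
  obtain ⟨n, hn⟩ := Nat.exists_eq_succ_of_ne_zero (List.length_pos_of_ne_nil hl).ne'
  have hsub : subdivideAux n (boundary (single l 1)) = subdivide (boundary (single l 1)) := by
    refine map_eq_of_mem_supported ?_ (boundary_single_mem_supported l)
    rintro k ⟨x, hk⟩
    obtain rfl : k.length = n := by simpa [hn] using hk.length_eq.symm
    simp [subdivide]
  rw [← hsub]
  simp [subdivide, hn, subdivideAux]

theorem boundary_subdivide (z : OrderedChain E) :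
    boundary (subdivide z) = subdivide (boundary z) := by
  suffices h : boundary ∘ₗ subdivide = subdivide ∘ₗ boundary (V := E) from LinearMap.congr_fun h z
  ext l : 2
  suffices boundary (subdivide (single l 1)) = subdivide (boundary (single l 1)) by simpa
  induction hn : l.length generalizing l with
  | zero => simp [List.length_eq_zero_iff.1 hn]
  | succ n ih =>
    have hcomm : boundary (subdivide (boundary (single l 1))) =
        subdivide (boundary (boundary (single l 1))) := by
      refine map_eq_of_mem_supported (f := boundary ∘ₗ subdivide (E := E))
        (g := subdivide ∘ₗ boundary) ?_ (boundary_single_mem_supported l)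
      rintro k ⟨x, hk⟩
      exact ih k (by simpa [hn] using hk.length_eq.symm)
    rw [subdivide_single (List.ne_nil_of_length_eq_add_one hn), boundary_cone, hcomm,
      boundary_boundary_single, map_zero, map_zero, add_zero]

theorem boundary_subdivide_pow (N : ℕ) (z : OrderedChain E) :
    boundary ((subdivide ^ N) z) = (subdivide ^ N) (boundary z) := by
  induction N with
  | zero => rfl
  | succ N ih =>
    rw [pow_succ' subdivide, Module.End.mul_apply, Module.End.mul_apply, boundary_subdivide, ih]

/-- The ordered simplices inside the simplex `l`, with as many vertices as `l`, whose diameter is at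
most `q` times that of `l`. -/
def pieces (q : ℝ) (l : List E) : Set (List E) :=
  {k | k.length = l.length ∧ (∀ x ∈ k, x ∈ convexHull ℝ {x | x ∈ l}) ∧
    ∀ x ∈ k, ∀ y ∈ k, dist x y ≤ q * Metric.diam {x | x ∈ l}}

theorem subdivide_single_mem_supported {l : List E} {r : ℕ} (hl : l.length ≤ r + 1) :
    subdivide (single l 1) ∈ supported (ZMod 2) (ZMod 2) (pieces (r / (r + 1)) l) := by
  induction hn : l.length generalizing l with
  | zero =>
    rw [List.length_eq_zero_iff.1 hn, subdivide_single_nil]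
    exact Finsupp.single_mem_supported _ _ (by simp [pieces])
  | succ n ih =>
    have hne : l ≠ [] := List.ne_nil_of_length_eq_add_one hn
    rw [subdivide_single hne]
    refine map_mem_of_mem_supported (cone (barycenter l) ∘ₗ subdivide) ?_
      (boundary_single_mem_supported l)
    rintro t ⟨x, ht⟩
    have htlen : l.length = t.length + 1 := by simpa using ht.length_eq
    have htl : t ⊆ l := fun y hy => ht.mem_iff.2 (List.mem_cons_of_mem x hy)
    refine map_mem_of_mem_supported (cone (barycenter l)) ?_ (ih (l := t) (by omega) (by omega))
    rintro k ⟨hklen, hkt, hkdist⟩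
    have hmem : ∀ y ∈ barycenter l :: k, y ∈ convexHull ℝ {x | x ∈ l} :=
      List.forall_mem_cons.2 ⟨barycenter_mem_convexHull hne,
        fun y hy => convexHull_mono (fun _ h => htl h) (hkt y hy)⟩
    have hdiam : Metric.diam {x | x ∈ t} ≤ Metric.diam {x | x ∈ l} :=
      Metric.diam_mono (fun _ h => htl h) l.finite_toSet.isBounded
    have hdist : ∀ x ∈ k, ∀ y ∈ k, dist x y ≤ (r / (r + 1) : ℝ) * Metric.diam {x | x ∈ l} :=
      fun x hx y hy => (hkdist x hx y hy).trans (by gcongr)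
    rw [cone_single]
    refine Finsupp.single_mem_supported _ _ ⟨by simp [hklen, htlen], hmem, fun x hx y hy => ?_⟩
    obtain rfl | hy' := List.mem_cons.1 hy
    · exact dist_barycenter_le hl (hmem x hx)
    obtain rfl | hx' := List.mem_cons.1 hx
    · exact dist_comm _ y ▸ dist_barycenter_le hl (hmem y hy)
    · exact hdist x hx' y hy'

theorem subdivide_pow_single_mem_supported {l : List E} {r : ℕ} (hl : l.length ≤ r + 1) (N : ℕ) :
    (subdivide ^ N) (single l 1) ∈ supported (ZMod 2) (ZMod 2) (pieces ((r / (r + 1)) ^ N) l) := by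
  induction N with
  | zero =>
    refine Finsupp.single_mem_supported _ _ ⟨rfl, fun x hx => subset_convexHull ℝ _ hx, ?_⟩
    rw [pow_zero, one_mul]
    exact fun x hx y hy => Metric.dist_le_diam_of_mem l.finite_toSet.isBounded hx hy
  | succ N ih =>
    rw [pow_succ' subdivide, Module.End.mul_apply]
    refine map_mem_of_mem_supported subdivide ?_ ih
    rintro t ⟨htlen, htl, htdist⟩
    refine Finsupp.supported_mono ?_ (subdivide_single_mem_supported (htlen.trans_le hl))
    rintro k ⟨hklen, hkt, hkdist⟩
    have hdiam : Metric.diam {x | x ∈ t} ≤ (r / (r + 1) : ℝ) ^ N * Metric.diam {x | x ∈ l} :=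
      Metric.diam_le_of_forall_dist_le (by positivity) htdist
    refine ⟨hklen.trans htlen, fun x hx => ?_, fun x hx y hy => ?_⟩
    · exact convexHull_min htl (convex_convexHull ℝ _) (hkt x hx)
    · rw [pow_succ', mul_assoc]
      exact (hkdist x hx y hy).trans (by gcongr)

theorem exists_subdivide_pow_mem_supported {S : Set E} (hS : Bornology.IsBounded S) (r : ℕ) {δ : ℝ}
    (hδ : 0 < δ) :
    ∃ N : ℕ, ∀ l : List E, l.length ≤ r + 1 → (∀ x ∈ l, x ∈ S) →
      (subdivide ^ N) (single l 1) ∈ supported (ZMod 2) (ZMod 2)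
        {k | k.length = l.length ∧ (∀ x ∈ k, x ∈ convexHull ℝ {x | x ∈ l}) ∧
          ∀ x ∈ k, ∀ y ∈ k, dist x y < δ} := by
  have hratio : (r / (r + 1) : ℝ) < 1 := (div_lt_one (by positivity)).2 (lt_add_one _)
  have hlim := (tendsto_pow_atTop_nhds_zero_of_lt_one (by positivity) hratio).mul_const
    (Metric.diam S)
  rw [zero_mul] at hlim
  obtain ⟨N, hN⟩ := (hlim.eventually_lt_const hδ).exists
  refine ⟨N, fun l hl hlS => ?_⟩
  refine Finsupp.supported_mono ?_ (subdivide_pow_single_mem_supported hl N)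
  rintro k ⟨hklen, hkl, hkdist⟩
  refine ⟨hklen, hkl, fun x hx y hy => (hkdist x hx y hy).trans_lt (hN.trans_le' ?_)⟩
  gcongr
  exact Metric.diam_mono hlS hS

theorem subdivide_pow_single_mem_supported_convexHull (N : ℕ) (l : List E) :
    (subdivide ^ N) (single l 1) ∈
      supported (ZMod 2) (ZMod 2) {k | ∀ x ∈ k, x ∈ convexHull ℝ {x | x ∈ l}} :=
  Finsupp.supported_mono (fun _ hk => hk.2.1)
    (subdivide_pow_single_mem_supported l.length.le_succ N)

theorem count_push_subdivide_pow_eq_zero {τ : Multiset L} {f : E → L} {l : List E} {a : L}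
    (ha : a ∈ τ) (hf : ∀ x ∈ convexHull ℝ {x | x ∈ l}, f x ≠ a) (N : ℕ) :
    count τ (push f ((subdivide ^ N) (single l 1))) = 0 := by
  refine map_eq_of_mem_supported (f := count τ ∘ₗ push f) (g := 0) ?_
    (subdivide_pow_single_mem_supported_convexHull N l)
  intro k hk
  rw [LinearMap.comp_apply, push_single]
  refine count_single_of_ne ?_
  rintro rfl
  obtain ⟨x, hx, hxa⟩ := List.mem_map.1 ha
  exact hf x (hk x hx) hxa

/-- **Sperner's lemma** for iterated barycentric subdivisions. -/
theorem count_push_subdivide_pow_eq_one {ι : Type*} {v : ι → E} {e : ι → L} (he : e.Injective)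
    {f : E → L} {l : List ι} (hl : l.Nodup)
    (hf : ∀ t ⊆ l, ∀ x ∈ convexHull ℝ {x | x ∈ t.map v}, f x ∈ t.map e) (N : ℕ) :
    count (l.map e) (push f ((subdivide ^ N) (single (l.map v) 1))) = 1 := by
  induction l with
  | nil =>
    have hnil : (subdivide ^ N) (single ([] : List E) 1) = single [] 1 := by
      rw [Module.End.pow_apply]
      exact Function.IsFixedPt.iterate subdivide_single_nil N
    simp only [List.map_nil, hnil, push_single, count_single, if_true]
  | cons i l ih =>
    obtain ⟨hi, hnodup⟩ := List.nodup_cons.1 hl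
    have hboundary : count (l.map e)
          (push f ((subdivide ^ N) (boundary (single ((i :: l).map v) 1)))) =
        count (e i ::ₘ (l.map e : Multiset L))
          (push f ((subdivide ^ N) (single ((i :: l).map v) 1))) := by
      rw [← boundary_subdivide_pow]
      refine count_push_boundary (by simpa [he.eq_iff] using hi)
        (Multiset.coe_nodup.2 (hnodup.map he)) ?_
      refine Finsupp.supported_mono ?_ (subdivide_pow_single_mem_supported_convexHull N _)
      exact fun k hk x hx => hf _ (List.Subset.refl _) x (hk x hx)
    have hother : count (l.map e)
        (push f ((subdivide ^ N) (cone (v i) (push v (boundary (single l 1)))))) = 0 := by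
      refine map_eq_of_mem_supported
        (f := count (l.map e) ∘ₗ push f ∘ₗ (subdivide ^ N) ∘ₗ cone (v i) ∘ₗ push v)
        (g := 0) ?_ (boundary_single_mem_supported l)
      rintro k ⟨j, hk⟩
      have hjl : j ∈ l := hk.mem_iff.2 List.mem_cons_self
      have hkl : k ⊆ l := fun x hx => hk.mem_iff.2 (List.mem_cons_of_mem j hx)
      have hjk : j ∉ i :: k := List.not_mem_cons_of_ne_of_not_mem
        (ne_of_mem_of_not_mem hjl hi) (List.nodup_cons.1 (hk.nodup_iff.1 hnodup)).1
      simp only [LinearMap.comp_apply, push_single, cone_single, ← List.map_cons]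
      refine count_push_subdivide_pow_eq_zero (List.mem_map_of_mem hjl) (fun x hx hxj => ?_) N
      have hfx := hf _ (List.cons_subset_cons i hkl) x hx
      rw [hxj, List.mem_map_of_injective he] at hfx
      exact hjk hfx
    rw [List.map_cons (f := e), ← Multiset.cons_coe, ← hboundary, List.map_cons,
      boundary_single_cons, ← push_single, boundary_push, map_add, map_add, map_add,
      hother, add_zero, push_single]
    exact ih hnodup fun t ht => hf t (List.Subset.trans ht (List.subset_cons_self i l))

end Subdivision

section Homotopy

variable {X Z : Type*} [PseudoMetricSpace X]

variable (X) in
/-- The nonempty ordered simplices of diameter less than `δ`. -/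
def smallSimplices (δ : ℝ) : Set (List X) :=
  {k | k ≠ [] ∧ ∀ x ∈ k, ∀ y ∈ k, dist x y < δ}

theorem smallSimplices_mono {δ ε : ℝ} (h : δ ≤ ε) : smallSimplices X δ ⊆ smallSimplices X ε :=
  fun _ hk => ⟨hk.1, fun x hx y hy => (hk.2 x hx y hy).trans_le h⟩

variable [CompactSpace X]

theorem exists_forall_exists_disjoint_ball {A : L → Set X} {Λ : Set L}
    (hclosed : ∀ a ∈ Λ, IsClosed (A a)) (hinter : ∀ x, ∃ a ∈ Λ, x ∉ A a) :
    ∃ δ > 0, ∀ x, ∃ a ∈ Λ, Disjoint (Metric.ball x δ) (A a) := by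
  obtain ⟨δ, hδ, hball⟩ := lebesgue_number_lemma_of_metric (c := fun a : Λ => (A a)ᶜ)
    isCompact_univ (fun a => (hclosed a a.2).isOpen_compl)
    (fun x _ => Set.mem_iUnion.2 (by simpa using hinter x))
  refine ⟨δ, hδ, fun x => ?_⟩
  obtain ⟨a, ha⟩ := hball x (Set.mem_univ x)
  exact ⟨a, a.2, Set.disjoint_left.2 ha⟩

theorem exists_count_push_eq_zero {ℓ : X → L} {A : L → Set X} (hℓ : ∀ x, x ∈ A (ℓ x))
    {τ : Multiset L} (hclosed : ∀ a ∈ τ, IsClosed (A a)) (hinter : ∀ x, ∃ a ∈ τ, x ∉ A a) :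
    ∃ δ > 0, ∀ z ∈ supported (ZMod 2) (ZMod 2) (smallSimplices X δ), count τ (push ℓ z) = 0 := by
  obtain ⟨δ, hδ, hball⟩ := exists_forall_exists_disjoint_ball (Λ := {a | a ∈ τ}) hclosed hinter
  refine ⟨δ, hδ, fun z hz => ?_⟩
  refine map_eq_of_mem_supported (f := count τ ∘ₗ push ℓ) (g := 0) ?_ hz
  rintro k ⟨hk, hsmall⟩
  obtain ⟨x, hx⟩ := List.exists_mem_of_ne_nil k hk
  obtain ⟨a, ha, hdisj⟩ := hball x
  rw [LinearMap.comp_apply, push_single]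
  refine count_single_of_ne ?_
  rintro rfl
  obtain ⟨y, hy, rfl⟩ := List.mem_map.1 ha
  exact Set.disjoint_left.1 hdisj (hsmall y hy x hx) (hℓ y)

theorem exists_count_push_eq_of_homotopic [TopologicalSpace Z] {f g : C(X, Z)}
    (hfg : f.Homotopic g) {ℓ : Z → L} {w : L} {τ : Multiset L} (hw : w ∉ τ) (hτ : τ.Nodup)
    (hmem : ∀ z, ℓ z ∈ w ::ₘ τ) {A : L → Set Z} (hℓ : ∀ z, z ∈ A (ℓ z))
    (hclosed : ∀ a ∈ w ::ₘ τ, IsClosed (A a)) (hinter : ∀ z, ∃ a ∈ w ::ₘ τ, z ∉ A a) :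
    ∃ δ > 0, ∀ z, boundary z = 0 → z ∈ supported (ZMod 2) (ZMod 2) (smallSimplices X δ) →
      count τ (push (ℓ ∘ f) z) = count τ (push (ℓ ∘ g) z) := by
  obtain ⟨H⟩ := hfg
  obtain ⟨δ, hδ, hball⟩ := exists_forall_exists_disjoint_ball (Λ := {a | a ∈ w ::ₘ τ})
    (A := fun a => H ⁻¹' A a) (fun a ha => (hclosed a ha).preimage H.continuous)
    (fun q => hinter (H q))
  refine ⟨δ, hδ, fun z hz hsmall => ?_⟩
  have hlocal : IsLocallyConstant fun t : unitInterval =>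
      count τ (push (fun x => ℓ (H (t, x))) z) := by
    rw [IsLocallyConstant.iff_eventually_eq]
    intro t
    filter_upwards [Metric.ball_mem_nhds t hδ] with t' ht'
    refine count_push_eq_of_boundary_eq_zero hw hτ (fun _ => hmem _) (fun _ => hmem _) ?_ hz hsmall
    rintro k ⟨hk, hkdist⟩
    obtain ⟨x, hx⟩ := List.exists_mem_of_ne_nil k hk
    obtain ⟨a, ha, hdisj⟩ := hball (t, x)
    have havoid : ∀ y ∈ k, ∀ u ∈ Metric.ball t δ, ℓ (H (u, y)) ≠ a := by
      rintro y hy u hu rfl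
      exact Set.disjoint_left.1 hdisj (max_lt hu (hkdist y hy x hx)) (hℓ _)
    exact ⟨a, ha, fun y hy => ⟨havoid y hy t' ht', havoid y hy t (Metric.mem_ball_self hδ)⟩⟩
  simpa [Function.comp_def] using hlocal.apply_eq_of_preconnectedSpace 0 1

end Homotopy

section FacetCount

variable {E : Type*} [NormedAddCommGroup E] [NormedSpace ℝ E] {K : SimplicialComplex ℝ E}
  {s : Finset E} {p : s → ℝ}

theorem count_push_facetLabel_of_coe_eq (hs : s ∈ K.faces) (hp : ∀ i, 0 < p i)
    (hp1 : ∑ i, p i = 1) {l : List E} (hl : (l : Multiset E) = s.val) (N : ℕ) :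
    count (vertexLabels s) (push (facetLabel p) ((subdivide ^ N) (single l 1))) = 1 := by
  have hls : ∀ x ∈ l, x ∈ s := fun x hx => by rwa [← Multiset.mem_coe, hl] at hx
  lift l to List s using hls
  have hl_univ : (l : Multiset s) = Finset.univ.val :=
    Multiset.map_injective Subtype.val_injective (hl.trans s.val.attach_map_val.symm)
  have hnodup : l.Nodup := Multiset.coe_nodup.1 (hl_univ ▸ Finset.univ.nodup)
  have hlabels : vertexLabels s = (l.map some : List (Option s)) := by
    rw [vertexLabels, ← hl_univ, Multiset.map_coe]
  rw [hlabels]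
  refine count_push_subdivide_pow_eq_one (Option.some_injective _) hnodup (fun t _ x hx => ?_) N
  have htval : {x | x ∈ t.map (↑)} = ((↑) : s → E) '' {j | j ∈ t} := Set.ext fun _ => List.mem_map
  rw [htval] at hx
  have hxs : x ∈ convexHull ℝ (s : Set E) := convexHull_mono (Subtype.coe_image_subset _ _) hx
  obtain ⟨i, hi⟩ := exists_facetLabel_eq_some hp1 hxs
  rw [hi, List.mem_map_of_injective (Option.some_injective _)]
  exact mem_of_mem_coordGe_of_mem_convexHull (K.indep hs) (hp i)
    (mem_coordGe_of_facetLabel_eq_some hi) hx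

theorem count_push_facetLabel_of_not_subset (hs : s ∈ K.faces) (hp : ∀ i, 0 < p i) {t : Finset E}
    (ht : t ∈ K.faces) (hst : ¬ s ⊆ t) {l : List E} (hl : (l : Multiset E) = t.val) (N : ℕ) :
    count (vertexLabels s) (push (facetLabel p) ((subdivide ^ N) (single l 1))) = 0 := by
  obtain ⟨v, hvs, hvt⟩ := Finset.not_subset.1 hst
  have hlt : {x | x ∈ l} = (t : Set E) := by
    ext x
    rw [Set.mem_ofPred, ← Multiset.mem_coe, hl, Finset.mem_val, Finset.mem_coe]
  refine count_push_subdivide_pow_eq_zero (some_mem_vertexLabels ⟨v, hvs⟩) (fun x hx hxv => ?_) N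
  rw [hlt] at hx
  exact hvt (coe_mem_of_mem_coordGe hs ht (hp _) (mem_coordGe_of_facetLabel_eq_some hxv) hx)

theorem count_push_facetLabel_sum (hs : s ∈ K.facets) (hp : ∀ i, 0 < p i) (hp1 : ∑ i, p i = 1)
    {o : Finset E → List E} (ho : ∀ t, (o t : Multiset E) = t.val) {S : Finset (Finset E)}
    (hS : ∀ t ∈ S, t ∈ K.faces) (hsS : s ∈ S) (c : Finset E → ZMod 2) (N : ℕ) :
    count (vertexLabels s)
      (push (facetLabel p) ((subdivide ^ N) (∑ t ∈ S, c t • single (o t) 1))) = c s := by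
  simp only [map_sum, map_smul]
  rw [Finset.sum_eq_single_of_mem s hsS, count_push_facetLabel_of_coe_eq hs.1 hp hp1 (ho s),
    smul_eq_mul, mul_one]
  intro t ht hts
  rw [count_push_facetLabel_of_not_subset hs.1 hp (hS t ht) (fun hst => ?_) (ho t), smul_zero]
  exact hts (hs.2 (hS t ht) hst).symm

theorem exists_subdivide_pow_sum_mem_supported (hK : K.faces.Finite) {o : Finset E → List E}
    (ho : ∀ t, (o t : Multiset E) = t.val) (r : ℕ) {δ : ℝ} (hδ : 0 < δ) :
    ∃ N : ℕ, ∀ (S : Finset (Finset E)) (c : Finset E → ZMod 2),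
      (∀ t ∈ S, t ∈ K.faces ∧ t.card = r + 1) →
      (subdivide ^ N) (∑ t ∈ S, c t • single (o t) 1) ∈ supported (ZMod 2) (ZMod 2)
        {k | k ≠ [] ∧ (∀ x ∈ k, x ∈ K.space) ∧ ∀ x ∈ k, ∀ y ∈ k, dist x y < δ} := by
  obtain ⟨N, hN⟩ :=
    exists_subdivide_pow_mem_supported (isCompact_space_of_finite_faces hK).isBounded r hδ
  refine ⟨N, fun S c hS => ?_⟩
  simp only [map_sum, map_smul]
  refine sum_mem fun t ht => Submodule.smul_mem _ _ ?_
  obtain ⟨htK, htr⟩ := hS t ht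
  have hot : ∀ x ∈ o t, x ∈ t := fun x hx => by
    rwa [← Multiset.mem_coe, ho, Finset.mem_val] at hx
  have hlen : (o t).length = r + 1 := by rw [← Multiset.coe_card, ho, ← htr, Finset.card]
  refine Finsupp.supported_mono ?_ (hN (o t) hlen.le fun x hx => K.subset_space htK (hot x hx))
  rintro k ⟨hklen, hkt, hkdist⟩
  refine ⟨List.ne_nil_of_length_eq_add_one (hklen.trans hlen), fun x hx => ?_, hkdist⟩
  exact K.convexHull_subset_space htK (convexHull_mono hot (hkt x hx))

theorem exists_cycle_count_push_facetLabel [DecidableEq E] (hK : K.faces.Finite) {r : ℕ}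
    (hr : 1 ≤ r) {c : Finset E → ZMod 2}
    (hc : ∀ t ∈ K.faces, t.card = r →
      ∑ s ∈ hK.toFinset.filter (fun s => t ⊆ s ∧ s.card = r + 1), c s = 0)
    (hs : s ∈ K.facets) (hsr : s.card = r + 1) (hp : ∀ i, 0 < p i)
    (hp1 : ∑ i, p i = 1) {δ : ℝ} (hδ : 0 < δ) :
    ∃ z : OrderedChain K.space, boundary z = 0 ∧
      z ∈ supported (ZMod 2) (ZMod 2) (smallSimplices K.space δ) ∧
      count (vertexLabels s) (push (facetLabel p ∘ (↑)) z) = c s := by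
  obtain ⟨o, ho, hboundary⟩ := exists_boundary_single_eq_sum_erase (V := E)
  obtain ⟨N, hN⟩ := exists_subdivide_pow_sum_mem_supported hK ho r hδ
  let S : Finset (Finset E) := hK.toFinset.filter (·.card = r + 1)
  have hS : ∀ t, t ∈ S ↔ t ∈ K.faces ∧ t.card = r + 1 := by simp [S]
  have hcycle : boundary (∑ t ∈ S, c t • single (o t) 1) = 0 := by
    refine boundary_sum_eq_zero hboundary (fun t ht => ((hS t).1 ht).2) fun t ht u hut hur => ?_
    have hu : u ∈ K.faces :=
      K.down_closed ((hS t).1 ht).1 hut (Finset.card_pos.1 (hr.trans_eq hur.symm))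
    rw [Finset.filter_filter, ← hc u hu hur]
    simp only [and_comm]
  obtain ⟨z, hz, hpush⟩ := exists_push_coe_eq (fun k hk => hk.2.1) (hN S c fun t => (hS t).1)
  refine ⟨z, push_injective Subtype.val_injective ?_, ?_, ?_⟩
  · rw [← boundary_push, hpush, boundary_subdivide_pow, hcycle, map_zero, map_zero]
  · refine Finsupp.supported_mono ?_ hz
    refine fun k hk => ⟨?_, fun x hx y hy => ?_⟩
    · exact fun h => hk.1 (List.map_eq_nil_iff.2 h)
    · exact hk.2.2 _ (List.mem_map_of_mem hx) _ (List.mem_map_of_mem hy)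
  · rw [← push_push, hpush]
    exact count_push_facetLabel_sum hs hp hp1 ho (fun t ht => ((hS t).1 ht).1)
      ((hS s).2 ⟨hs.1, hsr⟩) c N

end FacetCount

end OrderedChain

open OrderedChain in
theorem preimage_convexHull_subset_range_of_homotopic_id {E : Type*} [NormedAddCommGroup E]
    [NormedSpace ℝ E] [DecidableEq E] {K : SimplicialComplex ℝ E} (hK : K.faces.Finite) {r : ℕ}
    (hr : 1 ≤ r) {c : Finset E → ZMod 2}
    (hc : ∀ t ∈ K.faces, t.card = r →
      ∑ s ∈ hK.toFinset.filter (fun s => t ⊆ s ∧ s.card = r + 1), c s = 0)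
    {s : Finset E} (hs : s ∈ K.facets) (hsr : s.card = r + 1) (hcs : c s ≠ 0)
    {f : C(K.space, K.space)} (hf : f.Homotopic (ContinuousMap.id K.space)) :
    {x : K.space | (x : E) ∈ convexHull ℝ (s : Set E)} ⊆ Set.range f := by
  have : CompactSpace K.space := isCompact_iff_compactSpace.1 (isCompact_space_of_finite_faces hK)
  by_contra hsub
  obtain ⟨q, hq, hqf⟩ := Set.not_subset.1 hsub
  have hclosed : IsClosed (Set.range fun x => (f x : E)) :=
    (isCompact_range (continuous_subtype_val.comp f.continuous)).isClosed
  obtain ⟨p, hp, hp1, hpf⟩ := exists_pos_linearCombination_notMem (v := ((↑) : s → E))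
    (by simpa using hq) hclosed (by rintro ⟨x, hx⟩; exact hqf ⟨x, Subtype.ext hx⟩)
  have hlabel : ∀ x : K.space, (x : E) ∈ facetCover K s p (facetLabel p x) := fun x =>
    mem_facetCover_facetLabel hp1 x.2
  have hpreimage : ∀ a, IsClosed (((↑) : K.space → E) ⁻¹' facetCover K s p a) := fun a =>
    (isClosed_facetCover hK a).preimage continuous_subtype_val
  have hmiss : ∀ x, ∃ a ∈ vertexLabels s, x ∉ f ⁻¹' ((↑) ⁻¹' facetCover K s p a) := by
    intro x
    by_contra! h
    exact hpf ⟨x, eq_linearCombination_of_forall_mem_coordGe (K.indep hs.1) hp1 fun i =>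
      h _ (some_mem_vertexLabels i)⟩
  obtain ⟨δ, hδ, hzero⟩ := exists_count_push_eq_zero (ℓ := fun x => facetLabel p (f x : E))
    (fun x => hlabel (f x)) (fun a _ => (hpreimage a).preimage f.continuous) hmiss
  obtain ⟨ε, hε, heq⟩ := exists_count_push_eq_of_homotopic hf
    none_notMem_vertexLabels nodup_vertexLabels (ℓ := fun x : K.space => facetLabel p (x : E))
    (fun _ => mem_none_cons_vertexLabels _) hlabel (fun a _ => hpreimage a) fun x =>
      (exists_notMem_facetCover hs hp x).imp fun a ha => ⟨mem_none_cons_vertexLabels a, ha⟩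
  obtain ⟨z, hz, hsmall, hcount⟩ :=
    exists_cycle_count_push_facetLabel hK hr hc hs hsr hp hp1 (lt_min hδ hε)
  refine hcs (hcount.symm.trans ?_)
  calc count (vertexLabels s) (push (facetLabel p ∘ (↑)) z)
      = count (vertexLabels s) (push (fun x => facetLabel p (f x : E)) z) :=
        (heq z hz (Finsupp.supported_mono (smallSimplices_mono (min_le_right δ ε)) hsmall)).symm
    _ = 0 := hzero z (Finsupp.supported_mono (smallSimplices_mono (min_le_left δ ε)) hsmall)

theorem statement12_general {E Y : Type*} [NormedAddCommGroup E] [NormedSpace ℝ E] [DecidableEq E]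
    [TopologicalSpace Y] {K : SimplicialComplex ℝ E} (hK : K.faces.Finite) {r : ℕ} (hr : 1 ≤ r)
    (φ : K.space ≃ₜ Y) {c : Finset E → ZMod 2}
    (hc : ∀ t ∈ K.faces, t.card = r →
      ∑ s ∈ hK.toFinset.filter (fun s => t ⊆ s ∧ s.card = r + 1), c s = 0)
    {fbar : C(Y, Y)} (hfbar : fbar.Homotopic (ContinuousMap.id Y)) :
    ⋃ s ∈ {s ∈ K.facets | s.card = r + 1 ∧ c s ≠ 0},
      φ '' {x : K.space | (x : E) ∈ convexHull ℝ (s : Set E)} ⊆ Set.range fbar := by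
  let f : C(K.space, K.space) := (φ.symm : C(Y, K.space)).comp (fbar.comp (φ : C(K.space, Y)))
  have hf : f.Homotopic (ContinuousMap.id K.space) := by
    simpa using (ContinuousMap.Homotopic.refl (φ.symm : C(Y, K.space))).comp
      (hfbar.comp (.refl (φ : C(K.space, Y))))
  refine Set.iUnion₂_subset fun s ⟨hs, hsr, hcs⟩ => ?_
  rintro _ ⟨x, hx, rfl⟩
  obtain ⟨y, rfl⟩ := preimage_convexHull_subset_range_of_homotopic_id hK hr hc hs hsr hcs hf hx
  exact ⟨φ y, (φ.apply_symm_apply _).symm⟩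

/-- Let `X = |K|` be the polyhedron of a finite simplicial `r`-complex
`K` with `H_r(X; ℤ/2) ≠ 0` (encoded, since `dim K = r`, by a nonzero `r`-cycle `c`), and
let `φ : |K| → Y` be a homeomorphism. Then for every continuous `f̄ : Y → Y` homotopic to
the identity of `Y`, the image under `φ` of the support of `c` is contained in `f̄(Y)`. -/
theorem statement12 (E : Type*) [NormedAddCommGroup E] [NormedSpace ℝ E] [DecidableEq E]
    (Y : Type*) [TopologicalSpace Y]
    (K : Geometry.SimplicialComplex ℝ E) (hKfin : K.faces.Finite)
    (r : ℕ) (hr : 1 ≤ r)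
    (hdim : ∀ s ∈ K.faces, s.card ≤ r + 1)
    (φ : ↥K.space ≃ₜ Y)
    (c : Finset E → ZMod 2)
    (hsupp : ∀ s : Finset E, c s ≠ 0 → s ∈ K.faces ∧ s.card = r + 1)
    (hne : c ≠ 0)
    (hcycle : ∀ t : Finset E, t ∈ K.faces → t.card = r →
      (∑ s ∈ hKfin.toFinset.filter (fun s => t ⊆ s ∧ s.card = r + 1), c s) = 0)
    (fbar : C(Y, Y)) (hfbar : fbar.Homotopic (ContinuousMap.id Y)) :
    (⋃ s ∈ {s : Finset E | c s ≠ 0},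
        φ '' {x : ↥K.space | (x : E) ∈ convexHull ℝ (s : Set E)}) ⊆
      Set.range fbar := by
  refine (Set.biUnion_subset_biUnion_left fun s hcs => ?_).trans
    (statement12_general hKfin hr φ hcycle hfbar)
  obtain ⟨hs, hsr⟩ := hsupp s hcs
  refine ⟨⟨hs, fun t ht hst => ?_⟩, hsr, hcs⟩
  exact (Finset.eq_of_subset_of_card_le hst (hsr ▸ hdim t ht))
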